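/- arXiv:math/0512072 — 2 statements merged into one kernel-verified Lean document; each statement's English description precedes it below -/
import Mathlib

section
/- Let n ≥ 3, let (h_{ij})_{1≤i,j≤n−1} be a complex Hermitian matrix, and let 1 ≤ q ≤ n−2. Define the C(n−1,q) × C(n−1,q) matrix (H^q_{IJ}), indexed by multi-indices I, J of length q, by H^q_{II} = Σ_{i∉I} h_{ii} and, for I ≠ J, H^q_{IJ} = Σ_{i≠j} ε^{iI}_{jJ} h_{ji}. Then (H^q_{IJ}) is Hermitian; if λ_1,…,λ_{n−1} are the eigenvalues of (h_{ij}) listed with multiplicity, then the eigenvalues of (H^q_{IJ}) listed with multiplicity are exactly the sums Σ_{i∉S} λ_i over the q-element subsets S of {1,…,n−1} (i.e., sums of the eigenvalues of (h_{ij}) taken n−1−q at a time); consequently (H^q_{IJ}) is positive definite whenever (h_{ij}) is positive definite and n−1−q > 0, and positive semidefinite whenever (h_{ij}) is positive semidefinite, regardless of the value of n. -/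
open scoped ComplexOrder

/-- `epsSign i I j J` is the sign `ε^{iI}_{jJ}`: when the tuples `iI` and `jJ` (the index `i`,
resp. `j`, prepended to the increasing enumeration of `I`, resp. `J`) consist of exactly the
same indices without repetition (i.e. `i ∉ I`, `j ∉ J`, and `insert i I = insert j J`), it is
the sign of the permutation carrying `jJ` to `iI`; otherwise it is `0`.  The tuple `iI` is
obtained from the increasing enumeration of `insert i I` by moving `i` (sitting at position
`#{k ∈ I | k < i}`) to the front, whence the formula for the sign. -/
noncomputable def epsSign {m : ℕ} (i : Fin m) (I : Finset (Fin m)) (j : Fin m)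
    (J : Finset (Fin m)) : ℂ :=
  if i ∉ I ∧ j ∉ J ∧ insert i I = insert j J then
    (-1 : ℂ) ^ ((I.filter (fun k => k < i)).card + (J.filter (fun k => k < j)).card)
  else 0

/-- The matrix `(H^q_{IJ})` of Lemma 6.4, indexed by the `q`-element multi-indices
(identified with `q`-element subsets of `{1, …, n-1}`):
`H^q_{II} = ∑_{i ∉ I} h i i` and, for `I ≠ J`, `H^q_{IJ} = ∑_{i ≠ j} ε^{iI}_{jJ} h j i`. -/
noncomputable def Hmat {m : ℕ} (q : ℕ) (h : Matrix (Fin m) (Fin m) ℂ) :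
    Matrix {s : Finset (Fin m) // s.card = q} {s : Finset (Fin m) // s.card = q} ℂ :=
  fun I J =>
    if I = J then ∑ i ∈ I.1ᶜ, h i i
    else ∑ i : Fin m, ∑ j : Fin m, if i ≠ j then epsSign i I.1 j J.1 * h j i else 0

/-! The operator `x ↦ ∑ i, bᵢ* ⌋ (f bᵢ ∧ x)` on the exterior algebra does not depend on the basis
`b`, preserves every `⋀^q`, and in the basis of `⋀^q` formed by the ordered wedge products of the
`bᵢ` its matrix is `Hmat q` of the matrix of `f`. Hence the characteristic polynomial of `Hmat q h`
only depends on the similarity class of `h`, and the spectral theorem reduces the computation of the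
eigenvalues to diagonal `h`, for which `Hmat q h` is diagonal. -/

open CliffordAlgebra (contractLeft)
open Module (Basis Dual End)
open scoped Matrix

section WedgeBasis

variable {R M ι : Type*} [CommRing R] [AddCommGroup M] [Module R M] [LinearOrder ι]

lemma ι_mul_ι_mul_swap (x y : M) (z : ExteriorAlgebra R M) :
    ExteriorAlgebra.ι R x * (ExteriorAlgebra.ι R y * z) =
      -(ExteriorAlgebra.ι R y * (ExteriorAlgebra.ι R x * z)) := by
  rw [← mul_assoc, ← mul_assoc, ← neg_mul,
    eq_neg_of_add_eq_zero_left (ExteriorAlgebra.ι_add_mul_swap x y)]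

lemma basis_exteriorAlgebra_eq_prod_sort (b : Basis ι R M) (S : Finset ι) :
    b.ExteriorAlgebra S = (S.sort.map fun i => ExteriorAlgebra.ι R (b i)).prod := by
  rw [ExteriorAlgebra.basis_apply_ofCard b rfl, ExteriorAlgebra.ιMulti_family,
    ExteriorAlgebra.ιMulti_apply, ← Finset.listMap_orderEmbOfFin_finRange S rfl, List.map_map,
    List.ofFn_eq_map]
  rfl

lemma basis_exteriorAlgebra_empty (b : Basis ι R M) : b.ExteriorAlgebra ∅ = 1 := by
  simp [basis_exteriorAlgebra_eq_prod_sort]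

lemma basis_exteriorAlgebra_insert_of_forall_lt (b : Basis ι R M) {a : ι} {S : Finset ι}
    (ha : ∀ k ∈ S, a < k) :
    b.ExteriorAlgebra (insert a S) = ExteriorAlgebra.ι R (b a) * b.ExteriorAlgebra S := by
  rw [basis_exteriorAlgebra_eq_prod_sort, basis_exteriorAlgebra_eq_prod_sort,
    Finset.sort_insert _ (fun k hk => (ha k hk).le) (fun haS => lt_irrefl a (ha a haS)),
    List.map_cons, List.prod_cons]

lemma ι_mul_basis_exteriorAlgebra_of_notMem (b : Basis ι R M) {j : ι} {J : Finset ι} (hj : j ∉ J) :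
    ExteriorAlgebra.ι R (b j) * b.ExteriorAlgebra J =
      (-1 : R) ^ (J.filter (· < j)).card • b.ExteriorAlgebra (insert j J) := by
  induction J using Finset.induction_on_min with
  | empty => rw [basis_exteriorAlgebra_insert_of_forall_lt b (by simp)]; simp
  | insert a S ha ih =>
    obtain ⟨hja, hjS⟩ : j ≠ a ∧ j ∉ S := by simpa using hj
    rcases hja.lt_or_gt with hlt | hgt
    · have hmin : ∀ k ∈ insert a S, j < k :=
        Finset.forall_mem_insert .. |>.2 ⟨hlt, fun k hk => hlt.trans (ha k hk)⟩
      rw [basis_exteriorAlgebra_insert_of_forall_lt b hmin,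
        Finset.filter_false_of_mem fun k hk => (hmin k hk).le.not_gt]
      simp
    · have hmin : ∀ k ∈ insert j S, a < k := Finset.forall_mem_insert .. |>.2 ⟨hgt, ha⟩
      have haS : a ∉ S.filter (· < j) := fun h => lt_irrefl a (ha a (Finset.mem_of_mem_filter a h))
      rw [basis_exteriorAlgebra_insert_of_forall_lt b ha, ι_mul_ι_mul_swap, ih hjS,
        Finset.insert_comm, basis_exteriorAlgebra_insert_of_forall_lt b hmin, Finset.filter_insert,
        if_pos hgt, Finset.card_insert_of_notMem haS, pow_succ]
      simp

lemma basis_exteriorAlgebra_insert (b : Basis ι R M) {j : ι} {J : Finset ι} (hj : j ∉ J) :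
    b.ExteriorAlgebra (insert j J) =
      (-1 : R) ^ (J.filter (· < j)).card • (ExteriorAlgebra.ι R (b j) * b.ExteriorAlgebra J) := by
  rw [ι_mul_basis_exteriorAlgebra_of_notMem b hj, smul_smul, ← mul_pow, neg_one_mul, neg_neg,
    one_pow, one_smul]

lemma ι_mul_basis_exteriorAlgebra_of_mem (b : Basis ι R M) {j : ι} {J : Finset ι} (hj : j ∈ J) :
    ExteriorAlgebra.ι R (b j) * b.ExteriorAlgebra J = 0 := by
  rw [← Finset.insert_erase hj, basis_exteriorAlgebra_insert b (Finset.notMem_erase j J),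
    mul_smul_comm, ← mul_assoc, ExteriorAlgebra.ι_sq_zero, zero_mul, smul_zero]

lemma contractLeft_coord_basis_exteriorAlgebra_of_notMem (b : Basis ι R M) {i : ι} {K : Finset ι}
    (hi : i ∉ K) : contractLeft (b.coord i) (b.ExteriorAlgebra K) = 0 := by
  induction K using Finset.induction_on_min with
  | empty => rw [basis_exteriorAlgebra_empty, CliffordAlgebra.contractLeft_one]
  | insert a S ha ih =>
    obtain ⟨hia, hiS⟩ : i ≠ a ∧ i ∉ S := by simpa using hi
    rw [basis_exteriorAlgebra_insert_of_forall_lt b ha, CliffordAlgebra.contractLeft_ι_mul, ih hiS]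
    simp [hia]

lemma contractLeft_coord_basis_exteriorAlgebra_insert (b : Basis ι R M) {i : ι} {I : Finset ι}
    (hi : i ∉ I) :
    contractLeft (b.coord i) (b.ExteriorAlgebra (insert i I)) =
      (-1 : R) ^ (I.filter (· < i)).card • b.ExteriorAlgebra I := by
  rw [basis_exteriorAlgebra_insert b hi, map_smul, CliffordAlgebra.contractLeft_ι_mul,
    contractLeft_coord_basis_exteriorAlgebra_of_notMem b hi]
  simp

/-- `Module.Basis.exteriorPower`, reindexed by the subtype of finsets that indexes `Hmat`. -/
noncomputable def finsetExteriorPowerBasis (b : Basis ι R M) (q : ℕ) :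
    Basis {s : Finset ι // s.card = q} R (⋀[R]^q M) :=
  (b.exteriorPower q).reindex (Equiv.subtypeEquivRight fun _ => Set.powersetCard.mem_iff)

lemma coe_finsetExteriorPowerBasis (b : Basis ι R M) (q : ℕ) (S : {s : Finset ι // s.card = q}) :
    (finsetExteriorPowerBasis b q S : ExteriorAlgebra R M) = b.ExteriorAlgebra S.1 := by
  rw [finsetExteriorPowerBasis, Basis.reindex_apply, ← ExteriorAlgebra.basis_eq_coe_basis]
  rfl

end WedgeBasis

section ContractWedge

variable {R M : Type*} [CommRing R] [AddCommGroup M] [Module R M]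

lemma contractLeft_mem_exteriorPower (d : Dual R M) {q : ℕ} {x : ExteriorAlgebra R M}
    (hx : x ∈ ⋀[R]^(q + 1) M) : contractLeft d x ∈ ⋀[R]^q M := by
  induction q generalizing x with
  | zero =>
    rw [zero_add, ExteriorAlgebra.exteriorPower, pow_one] at hx
    obtain ⟨v, rfl⟩ := hx
    rw [CliffordAlgebra.contractLeft_ι, ExteriorAlgebra.exteriorPower, pow_zero]
    exact Submodule.algebraMap_mem (d v)
  | succ q ih =>
    rw [ExteriorAlgebra.exteriorPower, pow_succ'] at hx
    induction hx using Submodule.mul_induction_on' with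
    | mem_mul_mem y hy z hz =>
      obtain ⟨v, rfl⟩ := hy
      rw [CliffordAlgebra.contractLeft_ι_mul]
      refine Submodule.sub_mem _ (Submodule.smul_mem _ _ hz) ?_
      rw [ExteriorAlgebra.exteriorPower, pow_succ']
      exact Submodule.mul_mem_mul (LinearMap.mem_range_self _ v) (ih hz)
    | add y _ z _ hy hz => rw [map_add]; exact Submodule.add_mem _ hy hz

variable [Module.Finite R M] [Module.Projective R M]

/-- The operator `x ↦ ∑ i, bᵢ* ⌋ (f bᵢ ∧ x)` on the exterior algebra, obtained without choosing a
basis by extending `d ⊗ v ↦ (x ↦ d ⌋ (v ∧ x))` linearly along `End M ≃ M* ⊗ M`. -/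
noncomputable def contractWedge : End R M →ₗ[R] End R (ExteriorAlgebra R M) :=
  TensorProduct.lift ((LinearMap.mul R (End R (ExteriorAlgebra R M))).compl₁₂ contractLeft
    ((Algebra.lmul R (ExteriorAlgebra R M)).toLinearMap ∘ₗ ExteriorAlgebra.ι R)) ∘ₗ
  (dualTensorHomEquiv R M M).symm.toLinearMap

lemma contractWedge_dualTensorHom (d : Dual R M) (v : M) (x : ExteriorAlgebra R M) :
    contractWedge (dualTensorHom R M M (d ⊗ₜ[R] v)) x =
      contractLeft d (ExteriorAlgebra.ι R v * x) := by
  have hdv : (dualTensorHomEquiv R M M).symm (dualTensorHom R M M (d ⊗ₜ[R] v)) = d ⊗ₜ[R] v :=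
    (dualTensorHomEquiv R M M).symm_apply_apply _
  rw [contractWedge, LinearMap.comp_apply, LinearEquiv.coe_coe, hdv]
  rfl

lemma contractWedge_apply {ι : Type*} [Fintype ι] (b : Basis ι R M) (f : End R M)
    (x : ExteriorAlgebra R M) :
    contractWedge f x = ∑ i, contractLeft (b.coord i) (ExteriorAlgebra.ι R (f (b i)) * x) := by
  have hf : f = ∑ i, dualTensorHom R M M (b.coord i ⊗ₜ[R] f (b i)) := by
    refine b.ext fun k => ?_
    classical simp [Finsupp.single_apply]
  conv_lhs => rw [hf, map_sum, LinearMap.sum_apply]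
  simp only [contractWedge_dualTensorHom]

lemma contractWedge_mem_exteriorPower (f : End R M) {q : ℕ} {x : ExteriorAlgebra R M}
    (hx : x ∈ ⋀[R]^q M) : contractWedge f x ∈ ⋀[R]^q M := by
  obtain ⟨t, rfl⟩ := (dualTensorHomEquiv R M M).surjective f
  induction t using TensorProduct.induction_on with
  | zero => simp
  | tmul d v =>
    refine (contractWedge_dualTensorHom d v x).symm ▸ contractLeft_mem_exteriorPower d ?_
    rw [ExteriorAlgebra.exteriorPower, pow_succ']
    exact Submodule.mul_mem_mul (LinearMap.mem_range_self _ v) hx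
  | add s t hs ht =>
    rw [map_add, map_add, LinearMap.add_apply]
    exact Submodule.add_mem _ hs ht

/-- The restriction of `contractWedge f` to the `q`-th exterior power. -/
noncomputable def contractWedgePower (q : ℕ) (f : End R M) : End R (⋀[R]^q M) :=
  (contractWedge f).restrict fun _ => contractWedge_mem_exteriorPower f

end ContractWedge

section Sign

variable {m : ℕ}

lemma epsSign_comm (i j : Fin m) (I J : Finset (Fin m)) : epsSign i I j J = epsSign j J i I := by
  simp only [epsSign, add_comm, eq_comm, and_left_comm]

lemma star_epsSign (i j : Fin m) (I J : Finset (Fin m)) :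
    star (epsSign i I j J) = epsSign i I j J := by
  unfold epsSign
  split_ifs <;> simp

lemma epsSign_of_eq_of_ne (i : Fin m) {I J : Finset (Fin m)} (hIJ : I ≠ J) :
    epsSign i I i J = 0 := by
  refine if_neg fun ⟨hiI, hiJ, hins⟩ => hIJ ?_
  rw [← Finset.erase_insert hiI, hins, Finset.erase_insert hiJ]

lemma epsSign_self (i j : Fin m) (I : Finset (Fin m)) :
    epsSign i I j I = if i = j ∧ i ∉ I then 1 else 0 := by
  unfold epsSign
  by_cases hij : i = j
  · subst hij
    simp [← two_mul]
  · rw [if_neg, if_neg (fun h => hij h.1)]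
    rintro ⟨hi, -, hins⟩
    exact hij ((Finset.insert_inj hi).1 hins)

lemma contractLeft_coord_ι_mul_basis_exteriorAlgebra {V : Type*} [AddCommGroup V] [Module ℂ V]
    (b : Basis (Fin m) ℂ V) {q : ℕ} (i j : Fin m) (J : {s : Finset (Fin m) // s.card = q}) :
    contractLeft (b.coord i) (ExteriorAlgebra.ι ℂ (b j) * b.ExteriorAlgebra J.1) =
      ∑ I : {s : Finset (Fin m) // s.card = q}, epsSign i I.1 j J.1 • b.ExteriorAlgebra I.1 := by
  by_cases hj : j ∈ J.1
  · simp [ι_mul_basis_exteriorAlgebra_of_mem b hj, epsSign, hj]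
  rw [ι_mul_basis_exteriorAlgebra_of_notMem b hj, map_smul]
  by_cases hi : i ∈ insert j J.1
  · obtain ⟨I, hiI, hins⟩ : ∃ I, i ∉ I ∧ insert i I = insert j J.1 :=
      ⟨_, Finset.notMem_erase i _, Finset.insert_erase hi⟩
    have hI : I.card = q := by
      have hcard := congrArg Finset.card hins
      rwa [Finset.card_insert_of_notMem hiI, Finset.card_insert_of_notMem hj, J.2,
        add_left_inj] at hcard
    rw [Fintype.sum_eq_single ⟨I, hI⟩, ← hins,
      contractLeft_coord_basis_exteriorAlgebra_insert b hiI, epsSign, if_pos ⟨hiI, hj, hins⟩,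
      smul_smul, pow_add, mul_comm]
    intro I' hI'
    rw [epsSign, if_neg, zero_smul]
    rintro ⟨hiI', -, hins'⟩
    exact hI' (Subtype.ext
      (by rw [← Finset.erase_insert hiI', hins', ← hins, Finset.erase_insert hiI]))
  · rw [contractLeft_coord_basis_exteriorAlgebra_of_notMem b hi, smul_zero, Finset.sum_eq_zero]
    intro I _
    rw [epsSign, if_neg, zero_smul]
    exact fun ⟨_, _, hins⟩ => hi (hins ▸ Finset.mem_insert_self i I.1)

end Sign

section Hmat

variable {m : ℕ}

lemma Hmat_apply (q : ℕ) (h : Matrix (Fin m) (Fin m) ℂ) (I J : {s : Finset (Fin m) // s.card = q}) :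
    Hmat q h I J = ∑ i, ∑ j, epsSign i I.1 j J.1 * h j i := by
  unfold Hmat
  split_ifs with hIJ
  · subst hIJ
    simp only [epsSign_self, ite_and, ite_mul, one_mul, zero_mul, Finset.sum_ite_eq,
      Finset.mem_univ, if_true, ← Finset.mem_compl, Finset.sum_ite_mem, Finset.univ_inter]
  · refine Finset.sum_congr rfl fun i _ => Finset.sum_congr rfl fun j _ => ?_
    split_ifs with hij
    · rfl
    · obtain rfl := not_not.1 hij
      rw [epsSign_of_eq_of_ne i (Subtype.coe_ne_coe.2 hIJ), zero_mul]

lemma Hmat_conjTranspose (q : ℕ) (h : Matrix (Fin m) (Fin m) ℂ) : (Hmat q h)ᴴ = Hmat q hᴴ := by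
  ext I J
  simp only [Matrix.conjTranspose_apply, Hmat_apply, star_sum, star_mul', star_epsSign]
  rw [Finset.sum_comm]
  simp only [epsSign_comm]

lemma Hmat_isHermitian (q : ℕ) {h : Matrix (Fin m) (Fin m) ℂ} (hh : h.IsHermitian) :
    (Hmat q h).IsHermitian := by
  rw [Matrix.IsHermitian, Hmat_conjTranspose, hh.eq]

lemma Hmat_diagonal (q : ℕ) (μ : Fin m → ℂ) :
    Hmat q (Matrix.diagonal μ) = Matrix.diagonal fun S => ∑ i ∈ S.1ᶜ, μ i := by
  ext I J
  rw [Hmat, Matrix.diagonal_apply]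
  refine if_congr Iff.rfl (by simp) (Finset.sum_eq_zero fun i _ => Finset.sum_eq_zero fun j _ => ?_)
  split_ifs with hij
  · rw [Matrix.diagonal_apply_ne' μ hij, mul_zero]
  · rfl

section Basis

variable {V : Type*} [AddCommGroup V] [Module ℂ V] [Module.Finite ℂ V]

lemma contractWedge_basis_exteriorAlgebra (b : Basis (Fin m) ℂ V) (f : End ℂ V) {q : ℕ}
    (J : {s : Finset (Fin m) // s.card = q}) :
    contractWedge f (b.ExteriorAlgebra J.1) =
      ∑ I, Hmat q (LinearMap.toMatrix b b f) I J • b.ExteriorAlgebra I.1 := by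
  have hf (i : Fin m) : f (b i) = ∑ j, LinearMap.toMatrix b b f j i • b j := by
    simp only [LinearMap.toMatrix_apply, b.sum_repr]
  calc contractWedge f (b.ExteriorAlgebra J.1)
      = ∑ i, contractLeft (b.coord i) (ExteriorAlgebra.ι ℂ (f (b i)) * b.ExteriorAlgebra J.1) :=
        contractWedge_apply b f _
    _ = ∑ i, ∑ j, ∑ I : {s : Finset (Fin m) // s.card = q},
          (epsSign i I.1 j J.1 * LinearMap.toMatrix b b f j i) • b.ExteriorAlgebra I.1 := by
        simp only [hf, map_sum, map_smul, Finset.sum_mul, smul_mul_assoc, Finset.smul_sum,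
          contractLeft_coord_ι_mul_basis_exteriorAlgebra, smul_smul, mul_comm]
    _ = ∑ I, Hmat q (LinearMap.toMatrix b b f) I J • b.ExteriorAlgebra I.1 := by
        simp only [Hmat_apply, Finset.sum_smul]
        rw [Finset.sum_comm_cycle]

lemma toMatrix_contractWedgePower (b : Basis (Fin m) ℂ V) (q : ℕ) (f : End ℂ V) :
    LinearMap.toMatrix (finsetExteriorPowerBasis b q) (finsetExteriorPowerBasis b q)
      (contractWedgePower q f) = Hmat q (LinearMap.toMatrix b b f) := by
  rw [← LinearEquiv.eq_symm_apply, LinearMap.toMatrix_symm]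
  refine (finsetExteriorPowerBasis b q).ext fun J => Subtype.ext ?_
  simp [contractWedgePower, Matrix.toLin_self, coe_finsetExteriorPowerBasis,
    contractWedge_basis_exteriorAlgebra]

lemma charpoly_Hmat_toMatrix (b : Basis (Fin m) ℂ V) (q : ℕ) (f : End ℂ V) :
    (Hmat q (LinearMap.toMatrix b b f)).charpoly = (contractWedgePower q f).charpoly := by
  rw [← toMatrix_contractWedgePower, LinearMap.charpoly_toMatrix]

end Basis

lemma charpoly_Hmat_units_conj (q : ℕ) (U : (Matrix (Fin m) (Fin m) ℂ)ˣ)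
    (A : Matrix (Fin m) (Fin m) ℂ) :
    (Hmat q (U.val * A * U⁻¹.val)).charpoly = (Hmat q A).charpoly := by
  let b := Pi.basisFun ℂ (Fin m)
  let e := Matrix.toLin'OfInv U.inv_mul U.mul_inv
  have he : LinearMap.toMatrix b b (e.conj (Matrix.toLin' A)) = U.val * A * U⁻¹.val := by
    change LinearMap.toMatrix' (Matrix.toLin' U.val ∘ₗ Matrix.toLin' A ∘ₗ Matrix.toLin' U⁻¹.val) = _
    simp only [LinearMap.toMatrix'_comp, LinearMap.toMatrix'_toLin', mul_assoc]
  have hA : LinearMap.toMatrix (b.map e) (b.map e) (e.conj (Matrix.toLin' A)) = A := by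
    rw [← LinearMap.toMatrix'_toLin' A]
    ext i j
    simp [LinearMap.toMatrix_apply, LinearMap.toMatrix'_apply, LinearEquiv.conj_apply, b]
  rw [← he, charpoly_Hmat_toMatrix, ← charpoly_Hmat_toMatrix (b.map e), hA]

lemma charpoly_Hmat_of_isHermitian (q : ℕ) {h : Matrix (Fin m) (Fin m) ℂ} (hh : h.IsHermitian) :
    (Hmat q h).charpoly = ∏ S : {s : Finset (Fin m) // s.card = q},
      (Polynomial.X - Polynomial.C ((∑ i ∈ S.1ᶜ, hh.eigenvalues i : ℝ) : ℂ)) := by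
  conv_lhs => rw [hh.spectral_theorem, Unitary.conjStarAlgAut_apply]
  have hconj := charpoly_Hmat_units_conj q (Unitary.toUnits hh.eigenvectorUnitary)
    (Matrix.diagonal (RCLike.ofReal ∘ hh.eigenvalues))
  refine hconj.trans ?_
  simp [Hmat_diagonal, Matrix.charpoly_diagonal]

lemma eigenvalues_Hmat (q : ℕ) {h : Matrix (Fin m) (Fin m) ℂ} (hh : h.IsHermitian) :
    Finset.univ.val.map
        (fun S : {s : Finset (Fin m) // s.card = q} => ∑ i ∈ S.1ᶜ, hh.eigenvalues i) =
      Finset.univ.val.map (Hmat_isHermitian q hh).eigenvalues := by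
  apply Multiset.map_injective Complex.ofReal_injective
  have hroots := (Hmat_isHermitian q hh).roots_charpoly_eq_eigenvalues
  rw [charpoly_Hmat_of_isHermitian q hh, Polynomial.roots_prod _ _
    (Finset.prod_ne_zero_iff.2 fun S _ => Polynomial.X_sub_C_ne_zero _)] at hroots
  simp only [Polynomial.roots_X_sub_C, Multiset.bind_singleton] at hroots
  simpa [Multiset.map_map, Function.comp_def] using hroots

lemma exists_sum_eq_eigenvalues_Hmat (q : ℕ) {h : Matrix (Fin m) (Fin m) ℂ} (hh : h.IsHermitian)
    (I : {s : Finset (Fin m) // s.card = q}) :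
    ∃ S : {s : Finset (Fin m) // s.card = q},
      ∑ i ∈ S.1ᶜ, hh.eigenvalues i = (Hmat_isHermitian q hh).eigenvalues I := by
  have hI := Multiset.mem_map_of_mem (Hmat_isHermitian q hh).eigenvalues (Finset.mem_univ_val I)
  rw [← eigenvalues_Hmat q hh] at hI
  simpa using hI

lemma Hmat_posDef {q : ℕ} (hq : q < m) {h : Matrix (Fin m) (Fin m) ℂ} (hh : h.PosDef) :
    (Hmat q h).PosDef := by
  refine (Hmat_isHermitian q hh.isHermitian).posDef_iff_eigenvalues_pos.2 fun I => ?_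
  obtain ⟨S, hS⟩ := exists_sum_eq_eigenvalues_Hmat q hh.isHermitian I
  have hcompl : S.1ᶜ.Nonempty := by
    rw [← Finset.card_pos, Finset.card_compl, S.2, Fintype.card_fin]
    exact Nat.sub_pos_of_lt hq
  rw [← hS]
  exact Finset.sum_pos (fun i _ => hh.eigenvalues_pos i) hcompl

lemma Hmat_posSemidef (q : ℕ) {h : Matrix (Fin m) (Fin m) ℂ} (hh : h.PosSemidef) :
    (Hmat q h).PosSemidef := by
  refine (Hmat_isHermitian q hh.isHermitian).posSemidef_iff_eigenvalues_nonneg.2 fun I => ?_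
  obtain ⟨S, hS⟩ := exists_sum_eq_eigenvalues_Hmat q hh.isHermitian I
  rw [Pi.zero_apply, ← hS]
  exact Finset.sum_nonneg fun i _ => hh.eigenvalues_nonneg i

end Hmat

/-- Lemma 6.4 of the paper: if `h` is an `(n-1) × (n-1)` Hermitian matrix and `1 ≤ q ≤ n-2`,
then `(H^q_{IJ})` is Hermitian; its eigenvalues, listed with multiplicity, are exactly the sums
`∑_{i ∉ S} λ_i` over the `q`-element subsets `S` (sums of the eigenvalues of `h` taken
`n-1-q` at a time); consequently it is positive definite whenever `h` is positive definite and
`n - 1 - q > 0`, and positive semidefinite whenever `h` is positive semidefinite, regardless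
of the value of `n`. -/
theorem Hmat_isHermitian_eigenvalues_posDef
    {n : ℕ} (hn : 3 ≤ n) (q : ℕ) (hq1 : 1 ≤ q) (hq2 : q ≤ n - 2)
    (h : Matrix (Fin (n - 1)) (Fin (n - 1)) ℂ) (hh : h.IsHermitian) :
    ∃ hH : (Hmat q h).IsHermitian,
      (Finset.univ.val.map
          (fun S : {s : Finset (Fin (n - 1)) // s.card = q} => ∑ i ∈ S.1ᶜ, hh.eigenvalues i))
        = Finset.univ.val.map hH.eigenvalues ∧
      (h.PosDef → 0 < n - 1 - q → (Hmat q h).PosDef) ∧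
      (h.PosSemidef → (Hmat q h).PosSemidef) :=
  ⟨Hmat_isHermitian q hh, eigenvalues_Hmat q hh,
    fun hpos hq => Hmat_posDef (Nat.lt_of_sub_pos hq) hpos, Hmat_posSemidef q⟩
end

section
/- Let T be a closed, densely defined linear operator on a complex Hilbert space H whose range is contained in its kernel, and let T* denote its Hilbert-space adjoint. Then the operator □ = T T* + T* T, with domain Dom(□) = {φ ∈ Dom(T) ∩ Dom(T*) : Tφ ∈ Dom(T*) and T*φ ∈ Dom(T)} and □φ = T(T*φ) + T*(Tφ), is self-adjoint. -/
/-! For a closed densely defined `A`, the space `E × F` is the orthogonal sum of the graph of `A`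
and the rotated graph of `A†`; projecting `(f, 0)` and `(0, g)` shows that `1 + A† A` and `1 + A A†`
are onto. If `S T = 0`, then `T† S† = 0` as well, so solutions of `a + S† S a = f` and
`b + T T† b = f` combine to the solution `u = a + b - f` of `u + (T T† + S† S) u = f`: the operators
`S` and `T†` do not see `b - f = -T T† b` and `a - f = -S† S a`, respectively. A symmetric operator
`A` for which `1 + A` is onto is self-adjoint. -/

open scoped LinearPMap

namespace UnboundedOperator

section Algebra

variable {R E F G : Type*} [Ring R] [AddCommGroup E] [Module R E] [AddCommGroup F] [Module R F]
  [AddCommGroup G] [Module R G]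

/-- The product `S T` of two unbounded operators, on its natural domain
`{x ∈ Dom T : T x ∈ Dom S}`; `LinearPMap.comp` instead requires `T` to map its whole domain into
that of `S`. -/
def comp (S : F →ₗ.[R] G) (T : E →ₗ.[R] F) : E →ₗ.[R] G :=
  S.comp (T.domRestrict ((S.domain.comap T.toFun).map T.domain.subtype)) <| by
    rintro ⟨_, ⟨x, hx, rfl⟩, _⟩
    exact hx

/-- The range of `T` is contained in the kernel of `S`, that is, `S T = 0` on all of `Dom T`. -/
def RangeLEKer (S : F →ₗ.[R] G) (T : E →ₗ.[R] F) : Prop :=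
  ∀ x : T.domain, ∃ hx : T x ∈ S.domain, S ⟨T x, hx⟩ = 0

variable {S : F →ₗ.[R] G} {T : E →ₗ.[R] F}

theorem mem_comp_domain_iff {x : E} :
    x ∈ (comp S T).domain ↔ ∃ hx : x ∈ T.domain, T ⟨x, hx⟩ ∈ S.domain := by
  constructor
  · rintro ⟨⟨x, hx, rfl⟩, _⟩
    exact ⟨x.2, hx⟩
  · rintro ⟨hx, hTx⟩
    exact ⟨⟨⟨x, hx⟩, hTx, rfl⟩, hx⟩

theorem comp_apply {x : E} (h : x ∈ (comp S T).domain) (hx : x ∈ T.domain)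
    (hTx : T ⟨x, hx⟩ ∈ S.domain) : comp S T ⟨x, h⟩ = S ⟨T ⟨x, hx⟩, hTx⟩ :=
  rfl

theorem mem_graph_comp {x : E} {y : F} {z : G} (hxy : (x, y) ∈ T.graph) (hyz : (y, z) ∈ S.graph) :
    (x, z) ∈ (comp S T).graph := by
  obtain ⟨⟨x, hx⟩, rfl, rfl⟩ := T.mem_graph_iff.1 hxy
  obtain ⟨⟨y, hTx⟩, hy : y = T ⟨x, hx⟩, rfl⟩ := S.mem_graph_iff.1 hyz
  subst hy
  exact (comp S T).mem_graph ⟨x, mem_comp_domain_iff.2 ⟨hx, hTx⟩⟩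

theorem mem_graph_add {A B : E →ₗ.[R] F} {x : E} {y z : F} (hy : (x, y) ∈ A.graph)
    (hz : (x, z) ∈ B.graph) : (x, y + z) ∈ (A + B).graph := by
  obtain ⟨⟨x, hA⟩, rfl, rfl⟩ := A.mem_graph_iff.1 hy
  obtain ⟨⟨x', hB⟩, hx : x' = x, rfl⟩ := B.mem_graph_iff.1 hz
  subst hx
  exact (A + B).mem_graph ⟨x', hA, hB⟩

theorem RangeLEKer.mem_graph_zero (h : RangeLEKer S T) {x : E} {y : F} (hxy : (x, y) ∈ T.graph) :
    (y, 0) ∈ S.graph := by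
  obtain ⟨x, rfl, rfl⟩ := T.mem_graph_iff.1 hxy
  obtain ⟨hTx, hSTx⟩ := h x
  exact S.mem_graph_iff.2 ⟨⟨T x, hTx⟩, rfl, hSTx⟩

end Algebra

variable {𝕜 E F G : Type*} [RCLike 𝕜]
  [NormedAddCommGroup E] [InnerProductSpace 𝕜 E]
  [NormedAddCommGroup F] [InnerProductSpace 𝕜 F]
  [NormedAddCommGroup G] [InnerProductSpace 𝕜 G]

section FormalAdjoint

theorem isFormalAdjoint_comp {S : F →ₗ.[𝕜] G} {S' : G →ₗ.[𝕜] F} {T : E →ₗ.[𝕜] F}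
    {T' : F →ₗ.[𝕜] E} (hS : S.IsFormalAdjoint S') (hT : T.IsFormalAdjoint T') :
    (comp S T).IsFormalAdjoint (comp T' S') := by
  rintro ⟨x, hx⟩ ⟨z, hz⟩
  obtain ⟨hxT, hTx⟩ := mem_comp_domain_iff.1 hx
  obtain ⟨hzS, hSz⟩ := mem_comp_domain_iff.1 hz
  rw [comp_apply hx hxT hTx, comp_apply hz hzS hSz]
  exact (hS ⟨_, hTx⟩ ⟨z, hzS⟩).trans (hT ⟨x, hxT⟩ ⟨_, hSz⟩)

theorem isFormalAdjoint_add {A B : E →ₗ.[𝕜] F} {A' B' : F →ₗ.[𝕜] E} (hA : A.IsFormalAdjoint A')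
    (hB : B.IsFormalAdjoint B') : (A + B).IsFormalAdjoint (A' + B') := by
  rintro ⟨x, hxA, hxB⟩ ⟨y, hyA, hyB⟩
  rw [LinearPMap.add_apply, LinearPMap.add_apply, inner_add_left, inner_add_right]
  exact congrArg₂ (· + ·) (hA ⟨x, hxA⟩ ⟨y, hyA⟩) (hB ⟨x, hxB⟩ ⟨y, hyB⟩)

end FormalAdjoint

section SelfAdjointnessCriterion

open ComplexConjugate

variable [CompleteSpace E] {A : E →ₗ.[𝕜] E} {c : 𝕜}

theorem dense_domain_of_surjective (hA : A.IsFormalAdjoint A)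
    (hc : Function.Surjective fun x : A.domain => c • (x : E) + A x)
    (hc' : Function.Surjective fun x : A.domain => conj c • (x : E) + A x) :
    Dense (A.domain : Set E) := by
  rw [Submodule.dense_iff_topologicalClosure_eq_top, Submodule.topologicalClosure_eq_top_iff,
    Submodule.eq_bot_iff]
  intro v hv
  obtain ⟨x, rfl⟩ := hc v
  obtain ⟨z, hz : conj c • (z : E) + A z = x⟩ := hc' x
  have hx : (x : E) = 0 := by
    rw [← inner_self_eq_zero (𝕜 := 𝕜)]
    calc
      inner 𝕜 (x : E) x = inner 𝕜 (x : E) (conj c • (z : E) + A z) := by rw [hz]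
      _ = inner 𝕜 (c • (x : E) + A x) z := by
        rw [inner_add_right, inner_smul_right, ← hA x z, inner_add_left, inner_smul_left]
      _ = 0 := Submodule.inner_left_of_mem_orthogonal z.2 hv
  obtain rfl : x = 0 := Subtype.ext hx
  simp

theorem isSelfAdjoint_of_surjective (hA : A.IsFormalAdjoint A)
    (hc : Function.Surjective fun x : A.domain => c • (x : E) + A x)
    (hc' : Function.Surjective fun x : A.domain => conj c • (x : E) + A x) :
    IsSelfAdjoint A := by
  have hdense := dense_domain_of_surjective hA hc hc'
  have hle : A ≤ A† := hA.le_adjoint hdense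
  refine (LinearPMap.eq_of_le_of_domain_eq hle (hle.1.antisymm fun y hy => ?_)).symm
  obtain ⟨x, hx : c • (x : E) + A x = c • y + A† ⟨y, hy⟩⟩ := hc (c • y + A† ⟨y, hy⟩)
  obtain ⟨z, hz : conj c • (z : E) + A z = y - x⟩ := hc' (y - x)
  have hyx : y - (x : E) = 0 := by
    rw [← inner_self_eq_zero (𝕜 := 𝕜)]
    calc
      inner 𝕜 (y - x) (y - x) = inner 𝕜 (y - x) (conj c • (z : E) + A z) := by rw [hz]
      _ = inner 𝕜 (c • y + A† ⟨y, hy⟩) (z : E) - inner 𝕜 (c • (x : E) + A x) (z : E) := by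
        simp only [inner_sub_left, inner_add_left, inner_add_right, inner_smul_left,
          inner_smul_right, hA x z, LinearPMap.adjoint_isFormalAdjoint hdense ⟨y, hy⟩ z]
        ring
      _ = 0 := by rw [hx, sub_self]
  rw [sub_eq_zero.1 hyx]
  exact x.2

end SelfAdjointnessCriterion

section Adjoint

variable [CompleteSpace E] {T : E →ₗ.[𝕜] F}

theorem mem_graph_adjoint_iff (hT : Dense (T.domain : Set E)) {y : F} {w : E} :
    (y, w) ∈ T†.graph ↔ ∀ x : T.domain, inner 𝕜 (T x) y = inner 𝕜 (x : E) w := by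
  simp [LinearPMap.adjoint_graph_eq_graph_adjoint hT, -LinearPMap.mem_graph_iff,
    LinearPMap.mem_graph_iff', sub_eq_zero]

theorem RangeLEKer.adjoint [CompleteSpace F] {S : F →ₗ.[𝕜] G} (h : RangeLEKer S T)
    (hS : Dense (S.domain : Set F)) (hT : Dense (T.domain : Set E)) : RangeLEKer T† S† := by
  intro y
  suffices (S† y, 0) ∈ T†.graph by
    obtain ⟨⟨_, hw⟩, rfl, hTw⟩ := T†.mem_graph_iff.1 this
    exact ⟨hw, hTw⟩
  rw [mem_graph_adjoint_iff hT]
  intro x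
  obtain ⟨hTx, hSTx⟩ := h x
  calc
    inner 𝕜 (T x) (S† y) = inner 𝕜 (S ⟨T x, hTx⟩) (y : G) :=
      ((LinearPMap.adjoint_isFormalAdjoint hS).symm ⟨T x, hTx⟩ y).symm
    _ = inner 𝕜 (x : E) 0 := by rw [hSTx, inner_zero_left, inner_zero_right]

variable [CompleteSpace F]

theorem exists_mem_graph_mem_graph_adjoint (hT : Dense (T.domain : Set E)) (hTc : T.IsClosed)
    (f : E) (g : F) :
    ∃ x x' y y', (x, x') ∈ T.graph ∧ (y, y') ∈ T†.graph ∧ x - y' = f ∧ x' + y = g := by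
  let e := WithLp.prodContinuousLinearEquiv 2 𝕜 E F
  let K : Submodule 𝕜 (WithLp 2 (E × F)) := T.graph.comap e.toLinearEquiv.toLinearMap
  have hK : IsClosed (K : Set (WithLp 2 (E × F))) := hTc.preimage e.continuous
  have : CompleteSpace K := hK.completeSpace_coe
  obtain ⟨p, hp, q, hq, hpq⟩ := K.exists_add_mem_mem_orthogonal (WithLp.toLp 2 (f, g))
  have hq_graph : (q.snd, -q.fst) ∈ T†.graph := by
    rw [mem_graph_adjoint_iff hT]
    intro x
    have hxq : inner 𝕜 (x : E) q.fst + inner 𝕜 (T x) q.snd = 0 :=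
      hq (WithLp.toLp 2 ((x : E), T x)) (T.mem_graph x)
    rw [inner_neg_right, eq_neg_of_add_eq_zero_right hxq]
  refine ⟨p.fst, p.snd, q.snd, -q.fst, hp, hq_graph, ?_, ?_⟩
  · rw [sub_neg_eq_add]
    exact (congrArg WithLp.fst hpq).symm
  · exact (congrArg WithLp.snd hpq).symm

theorem exists_add_adjoint_comp_self (hT : Dense (T.domain : Set E)) (hTc : T.IsClosed)
    (f : E) : ∃ x y, (x, y) ∈ T.graph ∧ (y, f - x) ∈ T†.graph := by
  obtain ⟨x, x', y, y', hx, hy, rfl, hxy⟩ := exists_mem_graph_mem_graph_adjoint hT hTc f 0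
  refine ⟨x, x', hx, ?_⟩
  rw [eq_neg_of_add_eq_zero_left hxy, sub_sub_cancel_left]
  exact T†.graph.neg_mem hy

theorem exists_add_self_comp_adjoint (hT : Dense (T.domain : Set E)) (hTc : T.IsClosed)
    (g : F) : ∃ y x, (y, x) ∈ T†.graph ∧ (x, g - y) ∈ T.graph := by
  obtain ⟨x, x', y, y', hx, hy, hxy, rfl⟩ := exists_mem_graph_mem_graph_adjoint hT hTc 0 g
  refine ⟨y, y', hy, ?_⟩
  rwa [← sub_eq_zero.1 hxy, add_sub_cancel_right]

end Adjoint

section Laplacian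

variable [CompleteSpace E] [CompleteSpace F]

/-- The Laplacian `□ = T T† + S† S` of `T : E → F` and `S : F → G`, on its natural domain. The
Kohn Laplacian is the case `S = T = ∂̄_b`; keeping `S` and `T` apart allows them to act between
different spaces, such as forms of consecutive degrees. -/
noncomputable def kohnLaplacian (S : F →ₗ.[𝕜] G) (T : E →ₗ.[𝕜] F) : F →ₗ.[𝕜] F :=
  comp T T† + comp S† S

variable {S : F →ₗ.[𝕜] G} {T : E →ₗ.[𝕜] F}

theorem mem_kohnLaplacian_domain_iff {x : F} :
    x ∈ (kohnLaplacian S T).domain ↔ ∃ (hxS : x ∈ S.domain) (hxT : x ∈ T†.domain),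
      S ⟨x, hxS⟩ ∈ S†.domain ∧ T† ⟨x, hxT⟩ ∈ T.domain := by
  rw [kohnLaplacian, LinearPMap.add_domain, Submodule.mem_inf, mem_comp_domain_iff,
    mem_comp_domain_iff]
  tauto

theorem kohnLaplacian_apply {x : F} (hx : x ∈ (kohnLaplacian S T).domain) (hxS : x ∈ S.domain)
    (hxT : x ∈ T†.domain) (hSx : S ⟨x, hxS⟩ ∈ S†.domain) (hTx : T† ⟨x, hxT⟩ ∈ T.domain) :
    kohnLaplacian S T ⟨x, hx⟩ = T ⟨T† ⟨x, hxT⟩, hTx⟩ + S† ⟨S ⟨x, hxS⟩, hSx⟩ :=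
  rfl

theorem kohnLaplacian_isFormalAdjoint_self (hS : Dense (S.domain : Set F))
    (hT : Dense (T.domain : Set E)) :
    (kohnLaplacian S T).IsFormalAdjoint (kohnLaplacian S T) :=
  have hS' := LinearPMap.adjoint_isFormalAdjoint hS
  have hT' := LinearPMap.adjoint_isFormalAdjoint hT
  isFormalAdjoint_add (isFormalAdjoint_comp hT'.symm hT') (isFormalAdjoint_comp hS' hS'.symm)

variable [CompleteSpace G]

theorem surjective_add_kohnLaplacian (hS : Dense (S.domain : Set F)) (hSc : S.IsClosed)
    (hT : Dense (T.domain : Set E)) (hTc : T.IsClosed) (hST : RangeLEKer S T) :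
    Function.Surjective fun x : (kohnLaplacian S T).domain => (x : F) + kohnLaplacian S T x := by
  intro f
  obtain ⟨a, Sa, ha, hSa⟩ := exists_add_adjoint_comp_self hS hSc f
  obtain ⟨b, Tb, hb, hTb⟩ := exists_add_self_comp_adjoint hT hTc f
  have hSu : (a + b - f, Sa) ∈ S.graph := by
    simpa only [Prod.mk_sub_mk, sub_zero, sub_sub_eq_add_sub] using
      S.graph.sub_mem ha (hST.mem_graph_zero hTb)
  have hTu : (a + b - f, Tb) ∈ T†.graph := by
    simpa only [Prod.mk_sub_mk, sub_zero, sub_sub_eq_add_sub, add_comm b a] using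
      T†.graph.sub_mem hb ((hST.adjoint hS hT).mem_graph_zero hSa)
  have hu : (a + b - f, (f - b) + (f - a)) ∈ (kohnLaplacian S T).graph :=
    mem_graph_add (mem_graph_comp hTu hTb) (mem_graph_comp hSu hSa)
  obtain ⟨u, hu_eq, hu_apply⟩ := (kohnLaplacian S T).mem_graph_iff.1 hu
  refine ⟨u, ?_⟩
  simp only [hu_eq, hu_apply]
  abel

end Laplacian

end UnboundedOperator

open UnboundedOperator

theorem kohn_laplacian_selfAdjoint_general {𝕜 E F G : Type*} [RCLike 𝕜]
    [NormedAddCommGroup E] [InnerProductSpace 𝕜 E] [CompleteSpace E]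
    [NormedAddCommGroup F] [InnerProductSpace 𝕜 F] [CompleteSpace F]
    [NormedAddCommGroup G] [InnerProductSpace 𝕜 G] [CompleteSpace G]
    {S : F →ₗ.[𝕜] G} {T : E →ₗ.[𝕜] F} (hS : Dense (S.domain : Set F)) (hSc : S.IsClosed)
    (hT : Dense (T.domain : Set E)) (hTc : T.IsClosed) (hST : RangeLEKer S T) :
    IsSelfAdjoint (kohnLaplacian S T) := by
  have hsurj := surjective_add_kohnLaplacian hS hSc hT hTc hST
  exact isSelfAdjoint_of_surjective (c := 1) (kohnLaplacian_isFormalAdjoint_self hS hT)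
    (by simpa using hsurj) (by simpa using hsurj)

/-- Section 5 of the paper: if `T` is a closed, densely defined operator on a complex Hilbert
space whose range is contained in its kernel (as for `T = ∂̄_b`, since `∂̄_b² = 0`), then the
Kohn Laplacian `□ = T T* + T* T`, with domain
`{φ ∈ Dom T ∩ Dom T* : Tφ ∈ Dom T* and T*φ ∈ Dom T}` and `□φ = T(T*φ) + T*(Tφ)`,
is self-adjoint. -/
theorem kohn_laplacian_selfAdjoint
    {H : Type*} [NormedAddCommGroup H] [InnerProductSpace ℂ H] [CompleteSpace H]
    (T : H →ₗ.[ℂ] H) (hdense : Dense (T.domain : Set H)) (hclosed : T.IsClosed)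
    (hrange : ∀ x : T.domain, ∃ hx : T x ∈ T.domain, T ⟨T x, hx⟩ = 0) :
    ∃ Box : H →ₗ.[ℂ] H,
      (∀ x : H, x ∈ Box.domain ↔
        ∃ (h1 : x ∈ T.domain) (h2 : x ∈ T.adjoint.domain),
          T ⟨x, h1⟩ ∈ T.adjoint.domain ∧ T.adjoint ⟨x, h2⟩ ∈ T.domain) ∧
      (∀ (x : H) (hx : x ∈ Box.domain) (h1 : x ∈ T.domain) (h2 : x ∈ T.adjoint.domain)
          (h3 : T ⟨x, h1⟩ ∈ T.adjoint.domain) (h4 : T.adjoint ⟨x, h2⟩ ∈ T.domain),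
        Box ⟨x, hx⟩ = T ⟨T.adjoint ⟨x, h2⟩, h4⟩ + T.adjoint ⟨T ⟨x, h1⟩, h3⟩) ∧
      IsSelfAdjoint Box := by
  exact ⟨kohnLaplacian T T, fun _ => mem_kohnLaplacian_domain_iff, fun _ => kohnLaplacian_apply,
    kohn_laplacian_selfAdjoint_general hdense hclosed hdense hclosed hrange⟩
end
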